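/- arXiv:2502.16727 — 3 statements merged into one kernel-verified Lean document; each statement's English description precedes it below -/
import Mathlib

section
/- Let R be a commutative ring, let k, l ≥ 1, and let α : Fin k → R and β : Fin l → R be families of elements. Define c_n ∈ R (for n ∈ ℤ, with c_n = 0 for n < 0) to be the n-th coefficient of the formal power series (∏_{j=1}^{l} (1 + β_j t)) · (∏_{i=1}^{k} (1 + α_i t))⁻¹ in R[[t]] (the inverse exists since the constant coefficient of ∏(1 + α_i t) is 1, hence a unit of R[[t]]). Then the determinant of the k×k matrix whose (i,j)-entry is c_{l − i + j} (for 1 ≤ i, j ≤ k) equals ∏_{i=1}^{k} ∏_{j=1}^{l} (β_j − α_i). (This is the computation identifying the Thom polynomial of the degeneracy type Σ^k with the rectangular Schur determinant Δ_{l^k}(c), via the equality Δ_{l^k}(c(ρ₂ − ρ₁)) = ∏(β_j − α_i) in §3.1.1.) -/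
/-!
Substituting `X⁻¹` in `∏ (X + α i)` gives `X⁻ᵏ ∏ (1 + α i X)`, so with `a = (∏ (1 + α i X))⁻¹`,
`f = ∏ (X + α i)` and `g = ∏ (X + β j)` the matrix of the theorem is the Toeplitz matrix of the
Laurent series `a · g(X⁻¹)`, while `a · f(X⁻¹) = X⁻ᵏ`. Multiplying the Sylvester matrix of `f` and
`g` on the left by the unipotent Toeplitz matrix of `a` multiplies its columns, read as Laurent
polynomials in `X⁻¹`, by `a`. The `l` columns coming from `f` become standard basis vectors, and
what remains is the `k × k` Toeplitz determinant of `a · g(X⁻¹)`. Hence that determinant is the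
resultant of `f` and `g`, the product of the values of `g` at the roots `-α i` of `f`.
-/

section Toeplitz

open Polynomial
open HahnSeries (single)
open scoped PowerSeries LaurentSeries Matrix

variable {R : Type*}

/-- The `n × n` Toeplitz matrix of a Laurent series: the coefficient of `X ^ d` fills the `d`-th
diagonal, counted positively above the main one. Multiplying a polynomial in `X⁻¹` by the series
acts on coefficient vectors through these matrices. -/
def toeplitz [Zero R] (φ : R⸨X⸩) (n : ℕ) : Matrix (Fin n) (Fin n) R :=
  Matrix.of fun i j => φ.coeff ((j : ℤ) - i)

theorem toeplitz_apply [Zero R] (φ : R⸨X⸩) {n : ℕ} (i j : Fin n) :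
    toeplitz φ n i j = φ.coeff ((j : ℤ) - i) :=
  rfl

theorem coeff_single_neg_mul [Semiring R] (φ : R⸨X⸩) (n d : ℤ) :
    (single (-n) 1 * φ).coeff d = φ.coeff (n + d) := by
  simpa using HahnSeries.coeff_single_mul_add (r := (1 : R)) (x := φ) (a := n + d) (b := -n)

theorem eq_coeff_coe_of_forall_nat [Semiring R] {c : ℤ → R} {φ : R⟦X⟧}
    (hneg : ∀ n < 0, c n = 0) (hnat : ∀ n : ℕ, c n = PowerSeries.coeff n φ) :
    c = (φ : R⸨X⸩).coeff := by
  funext n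
  rcases lt_or_ge n 0 with hn | hn
  · simp [hneg n hn, PowerSeries.coeff_coe, hn]
  · lift n to ℕ using hn
    rw [hnat, LaurentSeries.coeff_coe_powerSeries]

section CommSemiring

variable [CommSemiring R]

/-- The substitution `p ↦ p(X⁻¹)` of polynomials into Laurent series. It stands in for reversing the
coefficients, with no reference to the degree of `p`. -/
noncomputable def evalInvX : R[X] →+* R⸨X⸩ :=
  eval₂RingHom HahnSeries.C (single (-1) 1)

theorem evalInvX_X_pow (n : ℕ) : evalInvX (X ^ n : R[X]) = single (-n : ℤ) 1 := by
  simp [evalInvX]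

theorem evalInvX_X_add_C (r : R) :
    evalInvX (X + C r) =
      single (-1) 1 * ((1 + PowerSeries.C r * PowerSeries.X : R⟦X⟧) : R⸨X⸩) := by
  simp [evalInvX, mul_add, HahnSeries.C_apply, HahnSeries.single_mul_single]

theorem evalInvX_prod_X_add_C {ι : Type*} [Fintype ι] (b : ι → R) :
    evalInvX (∏ i, (X + C (b i))) =
      single (-Fintype.card ι : ℤ) 1 *
        ((∏ i, (1 + PowerSeries.C (b i) * PowerSeries.X) : R⟦X⟧) : R⸨X⸩) := by
  simp [evalInvX_X_add_C, Finset.prod_mul_distrib, HahnSeries.single_pow, map_prod]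

theorem coeff_mul_evalInvX (φ : R⸨X⸩) {p : R[X]} {N : ℕ} (hp : p.natDegree < N) (d : ℤ) :
    (φ * evalInvX p).coeff d = ∑ n : Fin N, φ.coeff (d + n) * p.coeff n := by
  have coeff_mul_monomial (n : ℕ) (r : R) :
      (φ * (HahnSeries.C r * single (-1) 1 ^ n)).coeff d = φ.coeff (d + n) * r := by
    simpa [HahnSeries.C_apply, HahnSeries.single_pow, HahnSeries.single_mul_single] using
      HahnSeries.coeff_mul_single_add (r := r) (x := φ) (a := d + n) (b := -n)
  rw [evalInvX, coe_eval₂RingHom, eval₂_eq_sum_range' _ hp, Finset.mul_sum, HahnSeries.coeff_sum,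
    Fin.sum_univ_eq_sum_range fun n => φ.coeff (d + n) * p.coeff n]
  simp only [coeff_mul_monomial]

theorem coeff_mul_evalInvX_X_pow_mul (φ : R⸨X⸩) (p : R[X]) (n : ℕ) (d : ℤ) :
    (φ * evalInvX (X ^ n * p)).coeff d = (φ * evalInvX p).coeff (n + d) := by
  rw [map_mul, evalInvX_X_pow, mul_left_comm, coeff_single_neg_mul]

theorem toeplitz_mulVec_coeff (φ : R⸨X⸩) {p : R[X]} {N : ℕ} (hp : p.natDegree < N) (i : Fin N) :
    (toeplitz φ N *ᵥ fun n => p.coeff n) i = (φ * evalInvX p).coeff (-i) := by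
  simp [coeff_mul_evalInvX φ hp, Matrix.mulVec, dotProduct, toeplitz_apply, sub_eq_neg_add]

theorem toeplitz_mulVec_coeff_X_pow_mul (φ : R⸨X⸩) {p : R[X]} {n N : ℕ} (h : n + p.natDegree < N)
    (i : Fin N) :
    (toeplitz φ N *ᵥ fun m => (X ^ n * p).coeff m) i = (φ * evalInvX p).coeff ((n : ℤ) - i) := by
  have natDegree_lt : (X ^ n * p).natDegree < N := by
    have := natDegree_mul_le (p := X ^ n) (q := p)
    have := natDegree_X_pow_le (R := R) n
    lia
  rw [toeplitz_mulVec_coeff φ natDegree_lt, coeff_mul_evalInvX_X_pow_mul, ← sub_eq_add_neg]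

theorem ite_mem_Icc_coeff_sub {p : R[X]} {d : ℕ} (hp : p.natDegree ≤ d) (i j : ℕ) :
    (if i ∈ Set.Icc j (j + d) then p.coeff (i - j) else 0) = (X ^ j * p).coeff i := by
  rw [coeff_X_pow_mul']
  by_cases hij : i ≤ j + d
  · simp [hij]
  · simp [hij, coeff_eq_zero_of_natDegree_lt (show p.natDegree < i - j by lia)]

theorem natDegree_prod_X_add_C [Nontrivial R] {ι : Type*} [Fintype ι] (b : ι → R) :
    (∏ i, (X + C (b i))).natDegree = Fintype.card ι := by
  simp [natDegree_prod_of_monic _ _ fun i _ => monic_X_add_C (b i)]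

theorem natDegree_prod_X_add_C_le {ι : Type*} [Fintype ι] (b : ι → R) :
    (∏ i, (X + C (b i))).natDegree ≤ Fintype.card ι := by
  nontriviality R
  exact (natDegree_prod_X_add_C b).le

theorem sylvester_apply_castAdd (f : R[X]) {g : R[X]} (k : ℕ) {l : ℕ} (hg : g.natDegree ≤ l)
    (i : Fin (k + l)) (j : Fin k) :
    sylvester f g k l i (Fin.castAdd l j) = (X ^ (j : ℕ) * g).coeff i := by
  simp only [sylvester, Matrix.of_apply, Fin.addCases_left, ite_mem_Icc_coeff_sub hg]

theorem sylvester_apply_natAdd {f : R[X]} (g : R[X]) {k : ℕ} (l : ℕ) (hf : f.natDegree ≤ k)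
    (i : Fin (k + l)) (j : Fin l) :
    sylvester f g k l i (Fin.natAdd k j) = (X ^ (j : ℕ) * f).coeff i := by
  simp only [sylvester, Matrix.of_apply, Fin.addCases_right, ite_mem_Icc_coeff_sub hf]

theorem toeplitz_mul_sylvester_apply_castAdd (φ : R⸨X⸩) (f : R[X]) {g : R[X]} (k : ℕ) {l : ℕ}
    (hg : g.natDegree ≤ l) (i : Fin (k + l)) (j : Fin k) :
    (toeplitz φ (k + l) * sylvester f g k l) i (Fin.castAdd l j) =
      (φ * evalInvX g).coeff ((j : ℤ) - i) := by
  rw [← toeplitz_mulVec_coeff_X_pow_mul φ (N := k + l) (by lia)]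
  simp only [Matrix.mul_apply, Matrix.mulVec, dotProduct, sylvester_apply_castAdd f k hg]

theorem toeplitz_mul_sylvester_apply_natAdd (φ : R⸨X⸩) {f : R[X]} (g : R[X]) {k : ℕ} (l : ℕ)
    (hf : f.natDegree ≤ k) (i : Fin (k + l)) (j : Fin l) :
    (toeplitz φ (k + l) * sylvester f g k l) i (Fin.natAdd k j) =
      (φ * evalInvX f).coeff ((j : ℤ) - i) := by
  rw [← toeplitz_mulVec_coeff_X_pow_mul φ (N := k + l) (by lia)]
  simp only [Matrix.mul_apply, Matrix.mulVec, dotProduct, sylvester_apply_natAdd g l hf]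

end CommSemiring

section CommRing

variable [CommRing R]

theorem det_toeplitz_coe (φ : R⟦X⟧) (n : ℕ) :
    (toeplitz (φ : R⸨X⸩) n).det = PowerSeries.constantCoeff φ ^ n := by
  have upper_triangular : (toeplitz (φ : R⸨X⸩) n).IsUpperTriangular := by
    intro i j hij
    have hij : j < i := hij
    rw [toeplitz_apply, PowerSeries.coeff_coe, if_pos (by omega)]
  simp [Matrix.det_of_isUpperTriangular upper_triangular, toeplitz_apply, PowerSeries.coeff_coe]

/-- `hφ` says that `φ` is inverse to the reversal `X ^ k * f(X⁻¹)` of `f`. -/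
theorem det_toeplitz_mul_sylvester (φ : R⸨X⸩) {f g : R[X]} {k l : ℕ} (hf : f.natDegree ≤ k)
    (hg : g.natDegree ≤ l) (hφ : φ * evalInvX f = single (-k : ℤ) 1) :
    (toeplitz φ (k + l) * sylvester f g k l).det = (toeplitz (φ * evalInvX g) k).det := by
  set M := (toeplitz φ (k + l) * sylvester f g k l).submatrix finSumFinEquiv finSumFinEquiv with hM
  have upper_left : M.toBlocks₁₁ = toeplitz (φ * evalInvX g) k := by
    ext i j
    simp [hM, Matrix.toBlocks₁₁, toeplitz_mul_sylvester_apply_castAdd φ f k hg, toeplitz_apply]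
  have upper_right : M.toBlocks₁₂ = 0 := by
    ext i j
    have : (j : ℤ) - i ≠ -k := by omega
    simp [hM, Matrix.toBlocks₁₂, toeplitz_mul_sylvester_apply_natAdd φ g l hf, hφ,
      HahnSeries.coeff_single_of_ne this]
  have lower_right : M.toBlocks₂₂ = 1 := by
    ext i j
    have : (j : ℤ) - (k + i) = -k ↔ i = j := by omega
    simp [hM, Matrix.toBlocks₂₂, toeplitz_mul_sylvester_apply_natAdd φ g l hf, hφ,
      HahnSeries.coeff_single, Matrix.one_apply, this]
  rw [← Matrix.det_submatrix_equiv_self finSumFinEquiv, ← hM, ← Matrix.fromBlocks_toBlocks M,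
    upper_left, upper_right, lower_right, Matrix.det_fromBlocks_zero₁₂, Matrix.det_one, mul_one]

theorem det_toeplitz_mul_evalInvX (φ : R⟦X⟧) {f g : R[X]} {k l : ℕ} (hf : f.natDegree ≤ k)
    (hg : g.natDegree ≤ l) (hφ : (φ : R⸨X⸩) * evalInvX f = single (-k : ℤ) 1) :
    (toeplitz ((φ : R⸨X⸩) * evalInvX g) k).det =
      PowerSeries.constantCoeff φ ^ (k + l) * resultant f g k l := by
  rw [← det_toeplitz_mul_sylvester _ hf hg hφ, Matrix.det_mul, det_toeplitz_coe, resultant]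

theorem resultant_prod_X_add_C_left {ι : Type*} [Fintype ι] (b : ι → R) {g : R[X]} {n : ℕ}
    (hg : g.natDegree ≤ n) :
    resultant (∏ i, (X + C (b i))) g (Fintype.card ι) n = ∏ i, g.eval (-b i) := by
  nontriviality R
  rw [← natDegree_prod_X_add_C b, resultant_prod_left _ _ _ _ (by simp) hg]
  simp [resultant_X_add_C_left, hg]

theorem det_toeplitz_prod_mul_of_prod_mul_eq_one {k l : ℕ} (α : Fin k → R) (β : Fin l → R)
    {a : R⟦X⟧} (ha : (∏ i, (1 + PowerSeries.C (α i) * PowerSeries.X)) * a = 1) :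
    (toeplitz (single (-l : ℤ) 1 *
      (((∏ j, (1 + PowerSeries.C (β j) * PowerSeries.X)) * a : R⟦X⟧) : R⸨X⸩)) k).det =
      ∏ i, ∏ j, (β j - α i) := by
  have natDegree_le {n : ℕ} (b : Fin n → R) : (∏ i, (X + C (b i))).natDegree ≤ n := by
    simpa using natDegree_prod_X_add_C_le b
  have evalInvX_prod {n : ℕ} (b : Fin n → R) :
      evalInvX (∏ i, (X + C (b i))) = single (-n : ℤ) 1 *
        ((∏ i, (1 + PowerSeries.C (b i) * PowerSeries.X) : R⟦X⟧) : R⸨X⸩) := by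
    simpa only [Fintype.card_fin] using evalInvX_prod_X_add_C b
  have constantCoeff_a : PowerSeries.constantCoeff a = 1 := by
    simpa [map_prod] using congrArg PowerSeries.constantCoeff ha
  have a_mul_evalInvX : (a : R⸨X⸩) * evalInvX (∏ i, (X + C (α i))) =
      single (-k : ℤ) 1 := by
    rw [evalInvX_prod, mul_left_comm, mul_comm (a : R⸨X⸩), ← PowerSeries.coe_mul, ha,
      PowerSeries.coe_one, mul_one]
  calc
    _ = (toeplitz ((a : R⸨X⸩) * evalInvX (∏ j, (X + C (β j)))) k).det := by
      rw [evalInvX_prod, PowerSeries.coe_mul, ← mul_assoc, mul_comm _ (a : R⸨X⸩)]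
    _ = resultant (∏ i, (X + C (α i))) (∏ j, (X + C (β j))) k l := by
      rw [det_toeplitz_mul_evalInvX a (natDegree_le α) (natDegree_le β) a_mul_evalInvX,
        constantCoeff_a, one_pow, one_mul]
    _ = ∏ i, (∏ j, (X + C (β j))).eval (-α i) := by
      simpa using resultant_prod_X_add_C_left α (natDegree_le β)
    _ = ∏ i, ∏ j, (β j - α i) := by
      simp only [eval_prod, eval_add, eval_X, eval_C, neg_add_eq_sub]

end CommRing

end Toeplitz

/-- **Thom–Porteous determinant identity.**
Let `R` be a commutative ring, `k, l ≥ 1`, `α : Fin k → R`, `β : Fin l → R`.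
Let `c n` (for `n : ℤ`, zero for `n < 0`) be the `n`-th coefficient of
`(∏ (1 + β j • t)) * (∏ (1 + α i • t))⁻¹` in `R⟦t⟧` (the inverse taken via `invOfUnit`,
since the constant coefficient of `∏ (1 + α i • t)` is `1`).
Then `det (c (l - i + j))_{1 ≤ i,j ≤ k} = ∏_{i,j} (β j - α i)`. -/
theorem stmt_0 (R : Type*) [CommRing R] (k l : ℕ) (hk : 1 ≤ k) (hl : 1 ≤ l)
    (α : Fin k → R) (β : Fin l → R) (c : ℤ → R)
    (hc_neg : ∀ n : ℤ, n < 0 → c n = 0)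
    (hc : ∀ n : ℕ, c n = PowerSeries.coeff n
      ((∏ j : Fin l, (1 + PowerSeries.C (β j) * PowerSeries.X)) *
        PowerSeries.invOfUnit (∏ i : Fin k, (1 + PowerSeries.C (α i) * PowerSeries.X)) 1)) :
    Matrix.det (Matrix.of fun i j : Fin k => c ((l : ℤ) - (i : ℤ) + (j : ℤ))) =
      ∏ i : Fin k, ∏ j : Fin l, (β j - α i) := by
  have hc_coe := eq_coeff_coe_of_forall_nat hc_neg hc
  have prod_mul_invOfUnit := PowerSeries.mul_invOfUnit
    (∏ i : Fin k, (1 + PowerSeries.C (α i) * PowerSeries.X)) 1 (by simp [map_prod])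
  rw [← det_toeplitz_prod_mul_of_prod_mul_eq_one α β prod_mul_invOfUnit]
  congr 1
  ext i j
  rw [Matrix.of_apply, toeplitz_apply, coeff_single_neg_mul, hc_coe]
  congr 1
  ring
end

section
/- Let P be the polynomial ring over ℤ in countably many variables a_1, a_2, a_3, …, and let I ⊆ P be the ideal generated by the elements r_k = ∑_{i=0}^{2k} (−1)^i a_i a_{2k−i} for all k ≥ 1, where a_0 denotes 1 (these are the coefficient relations of the identity (1 + a_1 + a_2 + ⋯)(1 − a_1 + a_2 − ⋯) = 1 defining the ring of universal Lagrange characteristic classes). Then the quotient ring P/I is torsion-free as a ℤ-module, and the images of the squarefree monomials ∏_{i∈S} a_i, where S ranges over all finite subsets of the positive integers, form a ℤ-module basis of P/I. (This is the assertion in Remark 5.1 that the ring of universal Lagrange characteristic classes is torsion free and has the additive basis of monomials a_1^{i_1} a_2^{i_2} ⋯ a_s^{i_s} with each i_k = 0 or 1.) -/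
/-!
Modulo the relations, `a_k ^ 2` is a combination of the products `a_i a_j` with `i + j = 2k` and
`i ≠ j`, so every class reduces to squarefree monomials; the point is that nothing more is lost.
Each such product has the degree of `a_k ^ 2`, but `i ^ 2 + j ^ 2 > 2 k ^ 2` because squaring is
strictly convex. Hence, up to sign, the `k`-th relation is `f_k = a_k ^ 2 + ⋯`, where the omitted
terms have the same degree and a larger value of the additive weight `a_k ↦ k ^ 2`. In a fixed
degree this weight is bounded, so the products `∏ a_k ^ (α_k % 2) * f_k ^ (α_k / 2)` differ from
the monomials `a ^ α` by a unitriangular change of basis and are themselves a basis of the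
polynomial ring. Multiplication by `f_k` raises `α_k` by `2`, so the ideal of relations is spanned
by those with some `α_k ≥ 2`, and the remaining ones, the squarefree monomials, descend to a basis
of the quotient.
-/

open MvPolynomial Module
open Finsupp (weight single)

section LinearAlgebra

variable {ι Γ R M : Type*} [Ring R] [AddCommGroup M] [Module R M] [Preorder Γ]

/-- The family `v` arises from the basis `b` by a unitriangular change of basis with respect to the
weight `φ` on the index set: `v i` is `b i` plus a combination of the `b j` of smaller weight. The
weight need be neither injective nor linearly ordered. -/
def IsUnitriangular (b : Basis ι R M) (φ : ι → Γ) (v : ι → M) : Prop :=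
  ∀ i, v i - b i ∈ Submodule.span R (b '' {j | φ j < φ i})

namespace IsUnitriangular

variable {b : Basis ι R M} {φ : ι → Γ} {v : ι → M}

theorem repr_apply_of_not_lt [DecidableEq ι] (h : IsUnitriangular b φ v) {i j : ι}
    (hij : ¬ φ i < φ j) : b.repr (v j) i = if j = i then 1 else 0 := by
  have hsub : b.repr (v j - b j) i = 0 :=
    Finsupp.notMem_support_iff.mp fun hi ↦ hij (b.mem_span_image.mp (h j) hi)
  rwa [map_sub, Finsupp.sub_apply, b.repr_self_apply, sub_eq_zero] at hsub

theorem linearIndependent (h : IsUnitriangular b φ v) : LinearIndependent R v := by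
  classical
  rw [linearIndependent_iff]
  intro l hl
  by_contra hne
  obtain ⟨i, hi, hmax⟩ := l.support.exists_maximalFor φ (Finsupp.support_nonempty_iff.mpr hne)
  have hcoeff : b.repr (Finsupp.linearCombination R v l) i = l i := by
    simp only [Finsupp.linearCombination_apply, Finsupp.sum, map_sum, map_smul,
      Finsupp.finsetSum_apply, Finsupp.smul_apply]
    rw [Finset.sum_congr rfl fun j hj ↦ by
      rw [h.repr_apply_of_not_lt fun hij ↦ hij.not_ge (hmax hj hij.le)]]
    simpa using fun h_zero : l i = 0 ↦ h_zero.symm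
  rw [hl, map_zero] at hcoeff
  exact Finsupp.mem_support_iff.mp hi hcoeff.symm

theorem span_range_eq_top (h : IsUnitriangular b φ v) (hφ : WellFounded (InvImage (· < ·) φ)) :
    Submodule.span R (Set.range v) = ⊤ := by
  rw [eq_top_iff, ← b.span_eq, Submodule.span_le]
  rintro _ ⟨i, rfl⟩
  induction i using hφ.induction with
  | _ i ih =>
    have hlower : v i - b i ∈ Submodule.span R (Set.range v) :=
      Submodule.span_le.mpr (by rintro _ ⟨j, hj, rfl⟩; exact ih j hj) (h i)
    simpa using Submodule.sub_mem _ (Submodule.subset_span (Set.mem_range_self i)) hlower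

/-- The basis obtained by a unitriangular change of basis along a well-founded weight. -/
noncomputable def basis (h : IsUnitriangular b φ v) (hφ : WellFounded (InvImage (· < ·) φ)) :
    Basis ι R M :=
  Basis.mk h.linearIndependent (h.span_range_eq_top hφ).ge

theorem coe_basis (h : IsUnitriangular b φ v) (hφ : WellFounded (InvImage (· < ·) φ)) :
    ⇑(h.basis hφ) = v :=
  Basis.coe_mk _ _

end IsUnitriangular

theorem exists_basis_of_ker_eq_span_image_compl {M' : Type*} [AddCommGroup M'] [Module R M']
    (b : Basis ι R M) {g : M →ₗ[R] M'} (hg : Function.Surjective g) {s : Set ι}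
    (hker : LinearMap.ker g = Submodule.span R (b '' sᶜ)) :
    ∃ B : Basis s R M', ∀ i : s, B i = g (b i) := by
  have hli : LinearIndependent R fun i : s ↦ g (b i) := by
    refine (b.linearIndependent.comp _ Subtype.val_injective).map (f := g) ?_
    rw [hker, Set.range_comp, Subtype.range_coe]
    exact b.linearIndependent.disjoint_span_image disjoint_compl_right
  have hspan : ⊤ ≤ Submodule.span R (Set.range fun i : s ↦ g (b i)) := by
    rw [← LinearMap.range_eq_top.mpr hg, LinearMap.range_eq_map, ← b.span_eq, Submodule.map_span,
      Submodule.span_le]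
    rintro _ ⟨_, ⟨i, rfl⟩, rfl⟩
    by_cases hi : i ∈ s
    · exact Submodule.subset_span ⟨⟨i, hi⟩, rfl⟩
    · have hgi : g (b i) = 0 :=
        LinearMap.mem_ker.mp (hker ▸ Submodule.subset_span (Set.mem_image_of_mem b hi))
      exact hgi ▸ Submodule.zero_mem _
  exact ⟨Basis.mk hli hspan, Basis.mk_apply hli hspan⟩

end LinearAlgebra

section LeadingMonomial

variable {σ R Γ : Type*} [CommRing R]

open scoped Pointwise in
theorem mul_mem_restrictSupport {s t u : Set (σ →₀ ℕ)} (h : s + t ⊆ u) {p q : MvPolynomial σ R}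
    (hp : p ∈ restrictSupport R s) (hq : q ∈ restrictSupport R t) :
    p * q ∈ restrictSupport R u :=
  restrictSupport_mono R h (restrictSupport_add R s t ▸ Submodule.mul_mem_mul hp hq)

variable [AddCommMonoid Γ] [PartialOrder Γ]

/-- `p` is the monomial with exponent `α` plus terms of smaller `w`-weight. As weights are only
partially ordered and may coincide, this is weaker than being monic for a monomial order. -/
def HasLeadingMonomial (w : σ → Γ) (p : MvPolynomial σ R) (α : σ →₀ ℕ) : Prop :=
  p - monomial α 1 ∈ restrictSupport R {γ | weight w γ < weight w α}

namespace HasLeadingMonomial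

variable {w : σ → Γ} {p q : MvPolynomial σ R} {α β : σ →₀ ℕ}

theorem monomial (w : σ → Γ) (α : σ →₀ ℕ) :
    HasLeadingMonomial w (MvPolynomial.monomial α (1 : R)) α := by
  rw [HasLeadingMonomial, sub_self]
  exact Submodule.zero_mem _

theorem isUnitriangular {v : (σ →₀ ℕ) → MvPolynomial σ R} (h : ∀ α, HasLeadingMonomial w (v α) α) :
    IsUnitriangular (basisMonomials σ R) (weight w) v := fun α ↦ by
  simpa only [HasLeadingMonomial, restrictSupport_eq_span, coe_basisMonomials] using h α

variable [IsOrderedCancelAddMonoid Γ]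

theorem mul (hp : HasLeadingMonomial w p α) (hq : HasLeadingMonomial w q β) :
    HasLeadingMonomial w (p * q) (α + β) := by
  have expand : p * q - MvPolynomial.monomial (α + β) 1 =
      (p - MvPolynomial.monomial α 1) * (q - MvPolynomial.monomial β 1)
      + MvPolynomial.monomial α 1 * (q - MvPolynomial.monomial β 1)
      + (p - MvPolynomial.monomial α 1) * MvPolynomial.monomial β 1 := by
    rw [← one_mul (1 : R), ← monomial_mul, one_mul]
    ring
  have self_mem (γ : σ →₀ ℕ) : MvPolynomial.monomial γ (1 : R) ∈ restrictSupport R {γ} :=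
    monomial_mem_restrictSupport R |>.mpr (Or.inl rfl)
  rw [HasLeadingMonomial, expand, map_add]
  refine add_mem (add_mem ?_ ?_) ?_
  · refine mul_mem_restrictSupport (Set.add_subset_iff.mpr fun γ hγ δ hδ ↦ ?_) hp hq
    simpa only [Set.mem_ofPred_eq, map_add] using add_lt_add hγ hδ
  · refine mul_mem_restrictSupport (Set.add_subset_iff.mpr ?_) (self_mem α) hq
    rintro _ rfl δ hδ
    simpa only [Set.mem_ofPred_eq, map_add] using add_lt_add_right hδ _
  · refine mul_mem_restrictSupport (Set.add_subset_iff.mpr ?_) hp (self_mem β)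
    rintro γ hγ _ rfl
    simpa only [Set.mem_ofPred_eq, map_add] using add_lt_add_left hγ _

theorem pow (hp : HasLeadingMonomial w p α) (n : ℕ) : HasLeadingMonomial w (p ^ n) (n • α) := by
  induction n with
  | zero => simpa using monomial w 0
  | succ n ih => rw [pow_succ, succ_nsmul]; exact ih.mul hp

theorem prod {ι : Type*} {p : ι → MvPolynomial σ R} {α : ι → σ →₀ ℕ} (s : Finset ι)
    (h : ∀ i, HasLeadingMonomial w (p i) (α i)) :
    HasLeadingMonomial w (∏ i ∈ s, p i) (∑ i ∈ s, α i) := by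
  classical
  induction s using Finset.induction_on with
  | empty => simpa using monomial w 0
  | insert i s hi ih => rw [Finset.prod_insert hi, Finset.sum_insert hi]; exact (h i).mul ih

end HasLeadingMonomial

end LeadingMonomial

section AdicMonomial

variable {σ R : Type*} [CommRing R] {m : σ → ℕ} {f : σ → MvPolynomial σ R}

/-- The product over `k` of `X k ^ r * f k ^ q`, where `α k = m k * q + r` with `r < m k`. When
`f k` behaves like `X k ^ m k`, these replace the monomials `X ^ α` in an expansion by powers of the
`f k`. -/
noncomputable def adicMonomial (m : σ → ℕ) (f : σ → MvPolynomial σ R) (α : σ →₀ ℕ) :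
    MvPolynomial σ R :=
  α.prod fun k n ↦ X k ^ (n % m k) * f k ^ (n / m k)

theorem adicMonomial_single_add {k : σ} (hk : 0 < m k) (α : σ →₀ ℕ) :
    adicMonomial m f (single k (m k) + α) = f k * adicMonomial m f α := by
  classical
  have split (β : σ →₀ ℕ) : adicMonomial m f β =
      X k ^ (β k % m k) * f k ^ (β k / m k) * adicMonomial m f (β.erase k) :=
    (Finsupp.mul_prod_erase' β k _ fun i ↦ by simp).symm
  have herase : (single k (m k) + α).erase k = α.erase k := by
    rw [Finsupp.erase_add, Finsupp.erase_single, zero_add]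
  rw [split, split α, herase, Finsupp.add_apply, Finsupp.single_eq_same, Nat.add_mod_left,
    Nat.add_div_left _ hk]
  ring

theorem adicMonomial_of_lt {α : σ →₀ ℕ} (h : ∀ k, α k < m k) :
    adicMonomial m f α = monomial α 1 := by
  rw [monomial_eq, C_1, one_mul]
  refine Finset.prod_congr rfl fun k _ ↦ ?_
  simp only [Nat.mod_eq_of_lt (h k), Nat.div_eq_of_lt (h k), pow_zero, mul_one]

theorem restrictScalars_span_range_eq_span_adicMonomial (hm : ∀ k, 0 < m k)
    (htop : Submodule.span R (Set.range (adicMonomial m f)) = ⊤) :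
    (Ideal.span (Set.range f)).restrictScalars R =
      Submodule.span R (adicMonomial m f '' {α | ∀ k, α k < m k}ᶜ) := by
  rw [Ideal.span, ← Submodule.span_smul_of_span_eq_top htop]
  congr 1
  ext p
  constructor
  · rintro ⟨_, ⟨α, rfl⟩, _, ⟨k, rfl⟩, rfl⟩
    refine ⟨single k (m k) + α, fun h ↦ ?_, ?_⟩
    · simpa using h k
    · exact (adicMonomial_single_add (hm k) α).trans (mul_comm _ _)
  · rintro ⟨α, hα, rfl⟩
    obtain ⟨k, hk⟩ : ∃ k, m k ≤ α k := by simpa using hα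
    refine ⟨_, ⟨α - single k (m k), rfl⟩, _, ⟨k, rfl⟩, (mul_comm _ _).trans ?_⟩
    rw [← adicMonomial_single_add (hm k), add_tsub_cancel_of_le (Finsupp.single_le_iff.mpr hk)]

variable {Γ : Type*} [AddCommMonoid Γ] [PartialOrder Γ] [IsOrderedCancelAddMonoid Γ] {w : σ → Γ}

theorem hasLeadingMonomial_adicMonomial
    (hf : ∀ k, HasLeadingMonomial w (f k) (single k (m k))) (α : σ →₀ ℕ) :
    HasLeadingMonomial w (adicMonomial m f α) α := by
  have factor (k : σ) :
      HasLeadingMonomial w (X k ^ (α k % m k) * f k ^ (α k / m k)) (single k (α k)) := by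
    have hmul := ((HasLeadingMonomial.monomial w (single k 1)).pow (α k % m k)).mul
      ((hf k).pow (α k / m k))
    rwa [Finsupp.smul_single, Finsupp.smul_single, ← Finsupp.single_add, smul_eq_mul, mul_one,
      smul_eq_mul, Nat.mod_add_div'] at hmul
  have hprod := HasLeadingMonomial.prod α.support factor
  rwa [show ∑ k ∈ α.support, single k (α k) = α from α.sum_single] at hprod

theorem exists_basis_quotient_reducedMonomials (hm : ∀ k, 0 < m k)
    (hw : WellFounded (InvImage (· < ·) (weight w : (σ →₀ ℕ) → Γ)))
    (hf : ∀ k, HasLeadingMonomial w (f k) (single k (m k))) :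
    ∃ B : Basis {α : σ →₀ ℕ | ∀ k, α k < m k} R (MvPolynomial σ R ⧸ Ideal.span (Set.range f)),
      ∀ α, B α = Ideal.Quotient.mk _ (monomial α.1 1) := by
  have hadic : IsUnitriangular (basisMonomials σ R) (weight w) (adicMonomial m f) :=
    HasLeadingMonomial.isUnitriangular (hasLeadingMonomial_adicMonomial hf)
  obtain ⟨B, hB⟩ := exists_basis_of_ker_eq_span_image_compl (hadic.basis hw)
    (g := (Ideal.Quotient.mkₐ R (Ideal.span (Set.range f))).toLinearMap)
    (s := {α | ∀ k, α k < m k}) Ideal.Quotient.mk_surjective <| by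
      rw [hadic.coe_basis, ← restrictScalars_span_range_eq_span_adicMonomial hm
        (hadic.span_range_eq_top hw)]
      ext p
      exact Ideal.Quotient.eq_zero_iff_mem
  refine ⟨B, fun α ↦ (hB α).trans ?_⟩
  rw [hadic.coe_basis, adicMonomial_of_lt α.2]
  rfl

end AdicMonomial

section Squarefree

variable {σ R : Type*} [CommRing R]

/-- Finite sets of variables, identified with the exponents of squarefree monomials. -/
noncomputable def finsetEquivSquarefreeExponents (σ : Type*) [DecidableEq σ] :
    Finset σ ≃ {α : σ →₀ ℕ | ∀ k, α k < 2} where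
  toFun S := ⟨Multiset.toFinsupp S.val, fun k ↦
    Nat.lt_succ_of_le (Multiset.nodup_iff_count_le_one.mp S.nodup k)⟩
  invFun α := ⟨Finsupp.toMultiset α.1, Multiset.nodup_iff_count_le_one.mpr fun k ↦ by
    rw [Finsupp.count_toMultiset]
    exact Nat.le_of_lt_succ (α.2 k)⟩
  left_inv S := by simp
  right_inv α := by simp

theorem monomial_finsetEquivSquarefreeExponents [DecidableEq σ] (S : Finset σ) :
    monomial (finsetEquivSquarefreeExponents σ S).1 (1 : R) = ∏ i ∈ S, X i := by
  rw [monomial_eq, C_1, one_mul]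
  refine Finset.prod_congr S.val_toFinset fun i hi ↦ ?_
  have hcount : S.val.count i = 1 :=
    Multiset.count_eq_one_of_mem S.nodup (S.val_toFinset ▸ hi)
  exact (congrArg (X i ^ ·) hcount).trans (pow_one _)

theorem exists_basis_quotient_squarefreeMonomials {Γ : Type*} [AddCommMonoid Γ] [PartialOrder Γ]
    [IsOrderedCancelAddMonoid Γ] {w : σ → Γ} {f : σ → MvPolynomial σ R}
    (hw : WellFounded (InvImage (· < ·) (weight w : (σ →₀ ℕ) → Γ)))
    (hf : ∀ k, HasLeadingMonomial w (f k) (single k 2)) :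
    ∃ B : Basis (Finset σ) R (MvPolynomial σ R ⧸ Ideal.span (Set.range f)),
      ∀ S, B S = Ideal.Quotient.mk _ (∏ i ∈ S, X i) := by
  classical
  obtain ⟨B, hB⟩ := exists_basis_quotient_reducedMonomials (fun _ ↦ two_pos) hw hf
  refine ⟨B.reindex (finsetEquivSquarefreeExponents σ).symm, fun S ↦ ?_⟩
  rw [Basis.reindex_apply, Equiv.symm_symm, hB, monomial_finsetEquivSquarefreeExponents]

end Squarefree

section Lagrange

/-- The weight of `a_k`: its degree `k` together with `k ^ 2`. The order on the second component is
reversed, so that lower terms are those with the larger value of `∑ k ^ 2`. -/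
def lagrangeWeight (k : ℕ+) : ℕ × ℕᵒᵈ :=
  (k, OrderDual.toDual ((k : ℕ) ^ 2))

theorem weight_lagrangeWeight_snd_le (α : ℕ+ →₀ ℕ) :
    (weight lagrangeWeight α).2.ofDual ≤ (weight lagrangeWeight α).1 ^ 2 := by
  induction α using Finsupp.induction_linear with
  | zero => simp
  | add α β hα hβ =>
    rw [map_add, Prod.snd_add, Prod.fst_add, ofDual_add]
    nlinarith [Nat.zero_le ((weight lagrangeWeight α).1 * (weight lagrangeWeight β).1)]
  | single k n =>
    rw [Finsupp.weight_single]
    change n * (k : ℕ) ^ 2 ≤ (n * k) ^ 2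
    rw [mul_pow]
    exact Nat.mul_le_mul_right _ (Nat.le_self_pow two_ne_zero n)

theorem wellFounded_weight_lagrangeWeight :
    WellFounded (InvImage (· < ·) (weight lagrangeWeight : (ℕ+ →₀ ℕ) → ℕ × ℕᵒᵈ)) := by
  let excess (α : ℕ+ →₀ ℕ) : ℕ :=
    (weight lagrangeWeight α).1 ^ 2 - (weight lagrangeWeight α).2.ofDual
  refine Subrelation.wf (r := InvImage (· < ·) excess) (fun {α β} hlt ↦ ?_)
    (InvImage.wf excess wellFounded_lt)
  have hα := weight_lagrangeWeight_snd_le α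
  have hsq := Nat.pow_le_pow_left hlt.le.1 2
  rcases Prod.lt_iff.mp hlt with ⟨hdeg, hsnd⟩ | ⟨_, hsnd⟩
  · have hsq_lt := Nat.pow_lt_pow_left hdeg two_ne_zero
    have : (weight lagrangeWeight β).2.ofDual ≤ (weight lagrangeWeight α).2.ofDual := hsnd
    change _ - _ < _ - _
    lia
  · have : (weight lagrangeWeight β).2.ofDual < (weight lagrangeWeight α).2.ofDual := hsnd
    change _ - _ < _ - _
    lia

variable (R : Type*) [CommRing R]

/-- The `i`-th universal Lagrange class `a_i`, with `a_0 = 1`. -/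
noncomputable def lagrangeClass (i : ℕ) : MvPolynomial ℕ+ R :=
  if h : 0 < i then X ⟨i, h⟩ else 1

/-- The component of degree `2 * k` of `(1 + a₁ + a₂ + ⋯) * (1 - a₁ + a₂ - ⋯)`. -/
noncomputable def lagrangeRelation (k : ℕ) : MvPolynomial ℕ+ R :=
  ∑ i ∈ Finset.range (2 * k + 1), (-1) ^ i * (lagrangeClass R i * lagrangeClass R (2 * k - i))

/-- The ideal of relations between the universal Lagrange classes. -/
noncomputable def lagrangeIdeal : Ideal (MvPolynomial ℕ+ R) :=
  Ideal.span {r | ∃ k : ℕ, 1 ≤ k ∧ r = lagrangeRelation R k}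

theorem lagrangeIdeal_eq_span_signed :
    lagrangeIdeal R =
      Ideal.span (Set.range fun k : ℕ+ ↦ (-1) ^ (k : ℕ) * lagrangeRelation R k) := by
  apply le_antisymm <;> rw [lagrangeIdeal, Ideal.span_le]
  · rintro _ ⟨k, hk, rfl⟩
    have hmem := Ideal.mul_mem_left _ ((-1) ^ k)
      (Ideal.subset_span (Set.mem_range_self (f := fun k : ℕ+ ↦
        (-1) ^ (k : ℕ) * lagrangeRelation R k) ⟨k, hk⟩))
    simpa [← mul_assoc, ← mul_pow] using hmem
  · rintro _ ⟨k, rfl⟩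
    exact Ideal.mul_mem_left _ _ (Ideal.subset_span ⟨k, k.pos, rfl⟩)

theorem lagrangeClass_coe (k : ℕ+) : lagrangeClass R k = X k :=
  dif_pos k.pos

theorem lagrangeClass_mem_restrictSupport (i : ℕ) : lagrangeClass R i ∈ restrictSupport R
    {γ | weight lagrangeWeight γ = (i, OrderDual.toDual (i ^ 2))} := by
  rcases i.eq_zero_or_pos with rfl | hi
  · exact (monomial_mem_restrictSupport R).mpr (Or.inl (map_zero _))
  · lift i to ℕ+ using hi
    rw [lagrangeClass_coe]
    refine (monomial_mem_restrictSupport R).mpr (Or.inl ?_)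
    rw [Set.mem_ofPred_eq, Finsupp.weight_single, one_smul]
    rfl

theorem lagrangeClass_mul_mem_restrictSupport (i j : ℕ) :
    lagrangeClass R i * lagrangeClass R j ∈ restrictSupport R
      {γ | weight lagrangeWeight γ = (i + j, OrderDual.toDual (i ^ 2 + j ^ 2))} := by
  refine mul_mem_restrictSupport (Set.add_subset_iff.mpr fun γ hγ δ hδ ↦ ?_)
    (lagrangeClass_mem_restrictSupport R i) (lagrangeClass_mem_restrictSupport R j)
  rw [Set.mem_ofPred_eq] at hγ hδ ⊢
  rw [map_add, hγ, hδ]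
  rfl

theorem signed_lagrangeRelation_sub_sq (k : ℕ+) :
    (-1) ^ (k : ℕ) * lagrangeRelation R k - X k ^ 2 =
      ∑ i ∈ (Finset.range (2 * (k : ℕ) + 1)).erase k, (-1) ^ (k : ℕ) *
        ((-1) ^ i * (lagrangeClass R i * lagrangeClass R (2 * k - i))) := by
  have hk : (k : ℕ) ∈ Finset.range (2 * (k : ℕ) + 1) := Finset.mem_range.mpr (by lia)
  have middle : (-1) ^ (k : ℕ) * ((-1) ^ (k : ℕ) *
      (lagrangeClass R k * lagrangeClass R (2 * k - k))) = X k ^ 2 := by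
    rw [two_mul, Nat.add_sub_cancel, lagrangeClass_coe, ← mul_assoc, ← mul_pow, neg_mul_neg,
      one_mul, one_pow, one_mul, sq]
  rw [lagrangeRelation, Finset.mul_sum, ← Finset.add_sum_erase _ _ hk, middle,
    add_sub_cancel_left]

theorem hasLeadingMonomial_signed_lagrangeRelation (k : ℕ+) :
    HasLeadingMonomial lagrangeWeight ((-1) ^ (k : ℕ) * lagrangeRelation R k) (single k 2) := by
  rw [HasLeadingMonomial, ← X_pow_eq_monomial, signed_lagrangeRelation_sub_sq]
  refine Submodule.sum_mem _ fun i hi ↦ ?_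
  obtain ⟨hne, hi⟩ := Finset.mem_erase.mp hi
  obtain ⟨j, hj⟩ : ∃ j, i + j = 2 * (k : ℕ) := Nat.le.dest (Finset.mem_range_succ_iff.mp hi)
  have convex : 2 * (k : ℕ) ^ 2 < i ^ 2 + j ^ 2 := by
    zify at hne hj ⊢
    rw [eq_sub_of_add_eq' hj]
    linarith [sq_pos_of_ne_zero (sub_ne_zero.mpr hne)]
  have hprod := restrictSupport_mono R (t := {γ | weight lagrangeWeight γ <
      weight lagrangeWeight (single k 2)}) (fun γ hγ ↦ ?_)
    (lagrangeClass_mul_mem_restrictSupport R i j)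
  · rw [← hj, Nat.add_sub_cancel_left, ← mul_assoc, ← pow_add]
    rcases neg_one_pow_eq_or (MvPolynomial ℕ+ R) (k + i) with h | h <;> simpa [h] using hprod
  · rw [Set.mem_ofPred_eq] at hγ ⊢
    rw [hγ, Finsupp.weight_single]
    exact Prod.lt_iff.mpr (Or.inr ⟨hj.le, convex⟩)

theorem stmt_4_general :
    Module.IsTorsionFree R (MvPolynomial ℕ+ R ⧸ lagrangeIdeal R) ∧
    ∃ B : Basis (Finset ℕ+) R (MvPolynomial ℕ+ R ⧸ lagrangeIdeal R),
      ∀ S : Finset ℕ+, B S = Ideal.Quotient.mk (lagrangeIdeal R) (∏ i ∈ S, X i) := by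
  rw [lagrangeIdeal_eq_span_signed]
  obtain ⟨B, hB⟩ := exists_basis_quotient_squarefreeMonomials
    wellFounded_weight_lagrangeWeight (hasLeadingMonomial_signed_lagrangeRelation R)
  exact ⟨B.isTorsionFree, B, hB⟩

end Lagrange

open MvPolynomial in
/-- **The ring of universal Lagrange characteristic classes.**
Let `P = ℤ[a₁, a₂, …]` and `I` the ideal generated by the elements
`∑_{i=0}^{2k} (-1)^i aᵢ a_{2k-i}` (with `a₀ = 1`) for `k ≥ 1`.  Then `P/I` is torsion-free
as a `ℤ`-module and the images of the squarefree monomials `∏_{i ∈ S} aᵢ`, for `S` a finite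
set of positive integers, form a `ℤ`-module basis of `P/I` (Remark 5.1). -/
theorem stmt_4 :
    let a : ℕ → MvPolynomial ℕ+ ℤ := fun i => if h : 0 < i then X (⟨i, h⟩ : ℕ+) else 1
    let I : Ideal (MvPolynomial ℕ+ ℤ) :=
      Ideal.span {r | ∃ k : ℕ, 1 ≤ k ∧
        r = ∑ i ∈ Finset.range (2 * k + 1),
          (-1 : MvPolynomial ℕ+ ℤ) ^ i * (a i * a (2 * k - i))}
    (∀ (n : ℤ) (x : MvPolynomial ℕ+ ℤ ⧸ I), n • x = 0 → n = 0 ∨ x = 0) ∧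
    ∃ B : Module.Basis (Finset ℕ+) ℤ (MvPolynomial ℕ+ ℤ ⧸ I),
      ∀ S : Finset ℕ+, B S = Ideal.Quotient.mk I (∏ i ∈ S, X i) := by
  exact (stmt_4_general ℤ).imp_left Module.isTorsionFree_iff_smul_eq_zero.mp
end

section
/- Fix N ≥ 1 and work in the polynomial ring ℚ[α_1, …, α_N, β_1, …, β_N] in 2N variables. Define c_n (for n ≥ 1) to be the n-th coefficient of the formal power series (∏_{j=1}^{N} (1 + β_j t)) · (∏_{i=1}^{N} (1 + α_i t))⁻¹ in (ℚ[α, β])[[t]]. Then the elements c_1, …, c_N of ℚ[α_1, …, α_N, β_1, …, β_N] are algebraically independent over ℚ. (This algebraic independence of the quotient Chern classes is what guarantees the uniqueness of the universal polynomial tp(η) in Theorem 2.6: a polynomial identity in the quotient Chern classes c_1, …, c_N holding for all root families is unique.) -/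
/-!
Setting every `αᵢ` to `0` specialises `∏ (1 + βⱼ t) / ∏ (1 + αᵢ t)` to `∏ (1 + βⱼ t)`, whose
coefficients are the elementary symmetric polynomials in the `βⱼ`.  These are algebraically
independent by the fundamental theorem of symmetric polynomials, and a family whose image under an
algebra homomorphism is algebraically independent is itself algebraically independent.
-/

/-- The total Chern class `∏ (1 + γᵢ t)` with Chern roots `γ`, as a power series in `t`. -/
noncomputable def chernSeries {ι A : Type*} [Fintype ι] [CommSemiring A] (γ : ι → A) :
    PowerSeries A :=
  ∏ i, (1 + PowerSeries.C (γ i) * PowerSeries.X)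

section ChernSeries

variable {ι A B : Type*} [Fintype ι] [CommSemiring A] [CommSemiring B]

lemma constantCoeff_chernSeries (γ : ι → A) :
    PowerSeries.constantCoeff (chernSeries γ) = 1 := by
  simp [chernSeries]

lemma chernSeries_zero : chernSeries (0 : ι → A) = 1 := by
  simp [chernSeries]

lemma map_chernSeries (f : A →+* B) (γ : ι → A) :
    PowerSeries.map f (chernSeries γ) = chernSeries (f ∘ γ) := by
  simp [chernSeries]

lemma coeff_chernSeries (γ : ι → A) (n : ℕ) :
    PowerSeries.coeff n (chernSeries γ) = (Finset.univ.val.map γ).esymm n := by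
  classical
  have coeff_term (s : Finset ι) :
      PowerSeries.coeff n (∏ i ∈ s, PowerSeries.C (γ i) * PowerSeries.X) =
        if s.card = n then ∏ i ∈ s, γ i else 0 := by
    rw [Finset.prod_mul_distrib, Finset.prod_const, ← map_prod, PowerSeries.coeff_C_mul_X_pow]
    simp only [eq_comm]
  simp only [chernSeries, Finset.prod_one_add, map_sum, coeff_term]
  rw [Finset.esymm_map_val, Finset.powersetCard_eq_filter, Finset.sum_filter]

end ChernSeries

/-- The total quotient Chern class `∏ (1 + βⱼ t) / ∏ (1 + αᵢ t)`, whose `n`-th coefficient is `c_n`.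
The last argument `1` of `invOfUnit` is the constant coefficient of the denominator. -/
noncomputable def quotientChernSeries {σ τ A : Type*} [Fintype σ] [Fintype τ] [CommRing A]
    (α : σ → A) (β : τ → A) : PowerSeries A :=
  chernSeries β * PowerSeries.invOfUnit (chernSeries α) 1

section QuotientChernSeries

variable {σ τ A B : Type*} [Fintype σ] [Fintype τ] [CommRing A] [CommSemiring B]

lemma chernSeries_mul_quotientChernSeries (α : σ → A) (β : τ → A) :
    chernSeries α * quotientChernSeries α β = chernSeries β := by
  have mul_inv : chernSeries α * PowerSeries.invOfUnit (chernSeries α) 1 = 1 :=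
    PowerSeries.mul_invOfUnit _ _ (constantCoeff_chernSeries α)
  rw [quotientChernSeries, mul_left_comm, mul_inv, mul_one]

lemma map_quotientChernSeries_of_comp_eq_zero (f : A →+* B) {α : σ → A} (hα : f ∘ α = 0)
    (β : τ → A) :
    PowerSeries.map f (quotientChernSeries α β) = chernSeries (f ∘ β) := by
  calc PowerSeries.map f (quotientChernSeries α β)
      = PowerSeries.map f (chernSeries α) * PowerSeries.map f (quotientChernSeries α β) := by
        rw [map_chernSeries, hα, chernSeries_zero, one_mul]
    _ = chernSeries (f ∘ β) := by
        rw [← map_mul, chernSeries_mul_quotientChernSeries, map_chernSeries]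

end QuotientChernSeries

section AlgebraicIndependence

open MvPolynomial

variable {σ τ : Type*} [Fintype σ] [Fintype τ] (R : Type*) [CommRing R] {n : ℕ}

lemma algebraicIndependent_esymm (hn : n ≤ Fintype.card σ) :
    AlgebraicIndependent R (fun i : Fin n => esymm σ R (i + 1)) := by
  have h : Function.Injective fun p => (esymmAlgHom σ R n p).val :=
    Subtype.val_injective.comp (esymmAlgHom_injective R hn)
  simpa only [esymmAlgHom_apply, algebraicIndependent_iff_injective_aeval] using h

lemma aeval_zero_X_coeff_quotientChernSeries (k : ℕ) :
    aeval (Sum.elim 0 X : σ ⊕ τ → MvPolynomial τ R)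
      (PowerSeries.coeff k (quotientChernSeries
        (X ∘ Sum.inl : σ → MvPolynomial (σ ⊕ τ) R) (X ∘ Sum.inr))) = esymm τ R k := by
  let φ : MvPolynomial (σ ⊕ τ) R →ₐ[R] MvPolynomial τ R := aeval (Sum.elim 0 X)
  have φ_inl : φ.toRingHom ∘ X ∘ Sum.inl = 0 := by
    ext1 a
    simp [φ]
  have φ_inr : φ.toRingHom ∘ X ∘ Sum.inr = X := by
    ext1 b
    simp [φ]
  calc φ.toRingHom (PowerSeries.coeff k (quotientChernSeries (X ∘ Sum.inl) (X ∘ Sum.inr)))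
      = PowerSeries.coeff k (chernSeries (X : τ → MvPolynomial τ R)) := by
        rw [← PowerSeries.coeff_map, map_quotientChernSeries_of_comp_eq_zero _ φ_inl, φ_inr]
    _ = esymm τ R k := by rw [coeff_chernSeries, esymm_eq_multiset_esymm]

theorem stmt_11_general (hn : n ≤ Fintype.card τ) :
    AlgebraicIndependent R (fun i : Fin n =>
      PowerSeries.coeff ((i : ℕ) + 1) (quotientChernSeries
        (X ∘ Sum.inl : σ → MvPolynomial (σ ⊕ τ) R) (X ∘ Sum.inr))) := by
  apply AlgebraicIndependent.of_comp (aeval (Sum.elim 0 X : σ ⊕ τ → MvPolynomial τ R))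
  convert algebraicIndependent_esymm R hn using 2 with i
  exact aeval_zero_X_coeff_quotientChernSeries R (i + 1)

end AlgebraicIndependence

open MvPolynomial in
/-- **Algebraic independence of the quotient Chern classes (uniqueness in Theorem 2.6).**
In `ℚ[α₁,…,α_N, β₁,…,β_N]`, let `c_n` be the `n`-th coefficient of the power series
`(∏ (1 + βⱼ t)) * (∏ (1 + αᵢ t))⁻¹`.  Then `c₁, …, c_N` are algebraically independent
over `ℚ`. -/
theorem stmt_11 (N : ℕ) (hN : 1 ≤ N) :
    AlgebraicIndependent ℚ (fun i : Fin N =>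
      PowerSeries.coeff (R := MvPolynomial (Fin N ⊕ Fin N) ℚ) ((i : ℕ) + 1)
        ((∏ j : Fin N,
            (1 + PowerSeries.C (R := MvPolynomial (Fin N ⊕ Fin N) ℚ) (X (Sum.inr j)) *
              PowerSeries.X)) *
          PowerSeries.invOfUnit
            (∏ i : Fin N,
              (1 + PowerSeries.C (R := MvPolynomial (Fin N ⊕ Fin N) ℚ) (X (Sum.inl i)) *
                PowerSeries.X)) 1)) := by
  exact stmt_11_general ℚ (Fintype.card_fin N).ge
end
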